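/- Let T ⊆ 2^{<ℕ} be a tree of binary strings and let D ⊆ ℝ² be a set with ψ(⟨⟩) ∈ D ⊆ Ψ(T), where ⟨⟩ is the empty string. Then D is a dendrite if and only if D is homeomorphic to Ψ(S) for some nonempty tree of binary strings S ⊆ T. -/

import Mathlib

open Set Metric

section TopDefs

variable {α : Type*} [TopologicalSpace α]

/-- `A ⊆ α` is an arc with endpoints `x` and `y`:
a homeomorphic (continuous injective) image of `[0,1]` sending `0 ↦ x`, `1 ↦ y`. -/
def IsArc (A : Set α) (x y : α) : Prop :=
  ∃ f : Set.Icc (0:ℝ) 1 → α, Continuous f ∧ Function.Injective f ∧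
    Set.range f = A ∧ f ⟨0, by norm_num⟩ = x ∧ f ⟨1, by norm_num⟩ = y

/-- A continuum: a nonempty compact connected set. -/
def IsContinuum (X : Set α) : Prop := IsCompact X ∧ IsConnected X

/-- Any two distinct points of `X` are endpoints of an arc contained in `X`. -/
def ArcwiseConnectedSet (X : Set α) : Prop :=
  ∀ x ∈ X, ∀ y ∈ X, x ≠ y → ∃ A, A ⊆ X ∧ IsArc A x y

/-- `X` is unicoherent: for all closed connected `A, B ⊆ X` with `A ∪ B = X`,
the intersection `A ∩ B` is connected. -/
def UnicoherentSet (X : Set α) : Prop :=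
  ∀ A B : Set α, A ⊆ X → B ⊆ X → IsClosed A → IsClosed B →
    IsConnected A → IsConnected B → A ∪ B = X → IsConnected (A ∩ B)

/-- Every subcontinuum of `X` is unicoherent. -/
def HereditarilyUnicoherent (X : Set α) : Prop :=
  ∀ Y, Y ⊆ X → IsContinuum Y → UnicoherentSet Y

/-- A dendroid: an arcwise connected, hereditarily unicoherent continuum. -/
def IsDendroid (X : Set α) : Prop :=
  IsContinuum X ∧ ArcwiseConnectedSet X ∧ HereditarilyUnicoherent X

/-- The unit circle `S¹`. -/
def unitCircle : Set (EuclideanSpace ℝ (Fin 2)) := Metric.sphere 0 1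

/-- A dendrite: a locally connected continuum containing no subset homeomorphic to `S¹`. -/
def IsDendrite (X : Set α) : Prop :=
  IsContinuum X ∧ LocallyConnectedSpace ↥X ∧
    ∀ S : Set α, S ⊆ X → IsEmpty (↥S ≃ₜ ↥unitCircle)

/-- `x` and `y` lie in the same arc-component of `Y`. -/
def SameArcComponent (Y : Set α) (x y : α) : Prop :=
  x = y ∨ ∃ A, A ⊆ Y ∧ IsArc A x y

/-- `x` is a ramification point of `X`: `X \ {x}` has at least three arc-components. -/
def IsRamificationPoint (X : Set α) (x : α) : Prop :=
  x ∈ X ∧ ∃ u v w, u ∈ X \ {x} ∧ v ∈ X \ {x} ∧ w ∈ X \ {x} ∧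
    ¬ SameArcComponent (X \ {x}) u v ∧ ¬ SameArcComponent (X \ {x}) u w ∧
    ¬ SameArcComponent (X \ {x}) v w

/-- A tree (as a continuum): a dendrite with finitely many ramification points. -/
def IsTreeContinuum (X : Set α) : Prop :=
  IsDendrite X ∧ {x | IsRamificationPoint X x}.Finite

end TopDefs

section CompDefs

/-- The rational open ball in `ℝ²` coded by `((q₁, q₂), r)`. -/
def ballOfCode (c : (ℚ × ℚ) × ℚ) : Set (ℝ × ℝ) :=
  {x | dist x (((c.1.1 : ℝ), (c.1.2 : ℝ)) : ℝ × ℝ) < (c.2 : ℝ)}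

/-- A closed set `F ⊆ ℝ²` is `Π⁰₁` if it is the complement of the union of the rational
open balls coded by some c.e. set of codes. -/
def IsPi01Closed (F : Set (ℝ × ℝ)) : Prop :=
  ∃ W : (ℚ × ℚ) × ℚ → Prop, REPred W ∧ F = Set.univ \ ⋃ c ∈ {c | W c}, ballOfCode c

/-- `F ⊆ ℝ²` is c.e. closed if the set of codes of rational open balls meeting `F` is c.e. -/
def IsCEClosed (F : Set (ℝ × ℝ)) : Prop :=
  REPred (fun c : (ℚ × ℚ) × ℚ => (F ∩ ballOfCode c).Nonempty)

/-- A computable closed subset of `ℝ²`: both `Π⁰₁` and c.e. closed. -/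
def IsComputableClosed (F : Set (ℝ × ℝ)) : Prop :=
  IsPi01Closed F ∧ IsCEClosed F

/-- A point of `ℝ²` is computable if the set of codes of rational open balls
containing it is c.e. -/
def IsComputablePoint (x : ℝ × ℝ) : Prop :=
  REPred (fun c : (ℚ × ℚ) × ℚ => x ∈ ballOfCode c)

end CompDefs

section PsiDefs

/-- A tree of binary strings: a set of finite binary strings closed under prefixes. -/
def IsTreeOfStrings (T : Set (List Bool)) : Prop :=
  ∀ σ ∈ T, ∀ τ : List Bool, τ <+: σ → τ ∈ T

/-- The point `ψ(σ) ∈ ℝ²` associated with the binary string `σ`. -/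
noncomputable def psiPt (σ : List Bool) : ℝ × ℝ :=
  ((3:ℝ) ^ (-(σ.length : ℤ)) / 2 +
      2 * ∑ i ∈ Finset.range σ.length,
        (if σ.getD i false then (3:ℝ) ^ (-((i : ℤ) + 1)) else 0),
    (2:ℝ) ^ (-(σ.length : ℤ)))

/-- The planar embedding `Ψ(T)` of a tree `T` of binary strings: the closure of the union
of the segments from `ψ(σ⁻)` to `ψ(σ)` over nonempty `σ ∈ T` (together with the points
`ψ(σ)`, `σ ∈ T`, which makes no difference except for the degenerate trees `∅`, `{⟨⟩}`). -/
noncomputable def PsiSet (T : Set (List Bool)) : Set (ℝ × ℝ) :=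
  closure (psiPt '' T ∪ ⋃ σ ∈ T, ⋃ (_ : σ ≠ []), segment ℝ (psiPt σ.dropLast) (psiPt σ))

end PsiDefs


noncomputable section

/-- Interpolation parameter on the `n`-th level. -/
def tt (n : ℕ) (y : ℝ) : ℝ := max 0 (min 1 (2 - 2 ^ (n + 1) * y))

/-- sign of a bit -/
def sg (b : Bool) : ℝ := if b then 1 else -1

/-- abscissa of the point of height `y` on branch `X` -/
def gx (X : ℕ → Bool) (y : ℝ) : ℝ := 1 / 2 + ∑' n, sg (X n) * (1 / 3) ^ (n + 1) * tt n y

/-- point of height `y` on branch `X` -/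
def pp (X : ℕ → Bool) (y : ℝ) : ℝ × ℝ := (gx X y, y)

/-- initial segment of a branch -/
def tk (X : ℕ → Bool) (n : ℕ) : List Bool := (List.range n).map X

theorem sg_abs (b : Bool) : |sg b| = 1 := by cases b <;> simp [sg]

theorem tt_nonneg (n : ℕ) (y : ℝ) : 0 ≤ tt n y := le_max_left _ _

theorem tt_le_one (n : ℕ) (y : ℝ) : tt n y ≤ 1 :=
  max_le zero_le_one (min_le_left _ _)

theorem tt_continuous (n : ℕ) : Continuous (tt n) := by unfold tt; fun_prop

theorem two_half (n : ℕ) : (2:ℝ) ^ (n + 1) * (1 / 2) ^ n = 2 := by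
  rw [pow_succ, mul_right_comm, ← mul_pow]; norm_num

theorem two_half' (n : ℕ) : (2:ℝ) ^ (n + 1) * (1 / 2) ^ (n + 1) = 1 := by
  rw [← mul_pow]; norm_num

theorem tt_zero {n : ℕ} {y : ℝ} (h : (1 / 2) ^ n ≤ y) : tt n y = 0 := by
  have h2 : (2:ℝ) ^ (n + 1) * (1 / 2) ^ n ≤ 2 ^ (n + 1) * y := by gcongr
  rw [two_half] at h2
  exact max_eq_left ((min_le_right _ _).trans (by linarith))

theorem tt_pos {n : ℕ} {y : ℝ} (h : y < (1 / 2) ^ n) : 0 < tt n y := by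
  have h2 : 2 ^ (n + 1) * y < (2:ℝ) ^ (n + 1) * (1 / 2) ^ n := by gcongr
  rw [two_half] at h2
  exact lt_max_of_lt_right (lt_min one_pos (by linarith))

theorem tt_one {n : ℕ} {y : ℝ} (h : y ≤ (1 / 2) ^ (n + 1)) : tt n y = 1 := by
  have h2 : 2 ^ (n + 1) * y ≤ (2:ℝ) ^ (n + 1) * (1 / 2) ^ (n + 1) := by gcongr
  rw [two_half'] at h2
  unfold tt
  rw [min_eq_left (by linarith)]; simp

theorem tt_mid {n : ℕ} {y : ℝ} (h : y ≤ (1 / 2) ^ n) (h' : (1 / 2) ^ (n + 1) ≤ y) :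
    tt n y = 2 - 2 ^ (n + 1) * y := by
  have h2 : 2 ^ (n + 1) * y ≤ (2:ℝ) ^ (n + 1) * (1 / 2) ^ n := by gcongr
  have h3 : (2:ℝ) ^ (n + 1) * (1 / 2) ^ (n + 1) ≤ 2 ^ (n + 1) * y := by gcongr
  rw [two_half] at h2
  rw [two_half'] at h3
  unfold tt
  rw [min_eq_right (by linarith), max_eq_right (by linarith)]

theorem tt_anti {m n : ℕ} (hmn : m ≤ n) {y : ℝ} (hy : 0 ≤ y) : tt n y ≤ tt m y := by
  have : (2:ℝ) ^ (m + 1) * y ≤ 2 ^ (n + 1) * y := by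
    gcongr; norm_num
  unfold tt
  gcongr

theorem tt_lip (n : ℕ) (y z : ℝ) : |tt n y - tt n z| ≤ 2 ^ (n + 1) * |y - z| := by
  unfold tt
  have h1 := abs_max_sub_max_le_abs (min 1 (2 - 2 ^ (n + 1) * y)) (min 1 (2 - 2 ^ (n + 1) * z)) 0
  have h2 := abs_min_sub_min_le_max 1 (2 - 2 ^ (n + 1) * y) 1 (2 - 2 ^ (n + 1) * z)
  rw [max_comm 0, max_comm 0]
  refine h1.trans (h2.trans ?_)
  have : (2 - 2 ^ (n + 1) * y) - (2 - 2 ^ (n + 1) * z) = - (2 ^ (n + 1) * (y - z)) := by ring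
  rw [this, abs_neg, abs_mul, abs_of_pos (by positivity : (0:ℝ) < 2 ^ (n + 1))]
  simp

theorem geo3 : Summable (fun n : ℕ => (1 / 3 : ℝ) ^ (n + 1)) :=
  (summable_nat_add_iff 1).2 (summable_geometric_of_lt_one (by norm_num) (by norm_num))

theorem term_bound (X : ℕ → Bool) (y : ℝ) (n : ℕ) :
    ‖sg (X n) * (1 / 3) ^ (n + 1) * tt n y‖ ≤ (1 / 3 : ℝ) ^ (n + 1) := by
  rw [norm_mul, norm_mul, Real.norm_eq_abs, sg_abs, one_mul, Real.norm_eq_abs, Real.norm_eq_abs,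
    abs_of_nonneg (tt_nonneg _ _), abs_of_pos (by positivity)]
  exact mul_le_of_le_one_right (by positivity) (tt_le_one _ _)

theorem gx_summable (X : ℕ → Bool) (y : ℝ) :
    Summable (fun n => sg (X n) * (1 / 3) ^ (n + 1) * tt n y) :=
  Summable.of_norm_bounded geo3 (term_bound X y)

theorem sg_continuous : Continuous sg := continuous_of_discreteTopology

theorem pp_continuous : Continuous (fun q : (ℕ → Bool) × ℝ => pp q.1 q.2) := by
  unfold pp gx
  refine Continuous.prodMk (continuous_const.add ?_) continuous_snd
  refine continuous_tsum (fun n => ?_) geo3 (fun n q => term_bound q.1 q.2 n)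
  refine Continuous.mul (Continuous.mul ?_ continuous_const) ((tt_continuous n).comp continuous_snd)
  exact sg_continuous.comp ((continuous_apply n).comp continuous_fst)

theorem pp_lip (X : ℕ → Bool) (y z : ℝ) : dist (pp X y) (pp X z) ≤ 2 * |y - z| := by
  have hs : Summable (fun n : ℕ => (2 / 3 : ℝ) ^ (n + 1) * |y - z|) :=
    ((summable_nat_add_iff 1).2
      (summable_geometric_of_lt_one (by norm_num) (by norm_num))).mul_right _
  have hsum : ∑' n : ℕ, (2 / 3 : ℝ) ^ (n + 1) * |y - z| = 2 * |y - z| := by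
    rw [tsum_mul_right]
    congr 1
    simp_rw [pow_succ]
    rw [tsum_mul_right, tsum_geometric_of_lt_one (by norm_num) (by norm_num)]
    norm_num
  rw [Prod.dist_eq]
  refine max_le ?_ ?_
  · simp only [pp, gx, Real.dist_eq]
    rw [add_sub_add_left_eq_sub, ← (gx_summable X y).tsum_sub (gx_summable X z), ← hsum]
    rw [← Real.norm_eq_abs]
    refine tsum_of_norm_bounded hs.hasSum (fun n => ?_)
    rw [← mul_sub, norm_mul, norm_mul, Real.norm_eq_abs, sg_abs, one_mul, Real.norm_eq_abs,
      Real.norm_eq_abs, abs_of_pos (by positivity)]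
    calc (1 / 3 : ℝ) ^ (n + 1) * |tt n y - tt n z|
        ≤ (1 / 3 : ℝ) ^ (n + 1) * (2 ^ (n + 1) * |y - z|) := by
          gcongr; exact tt_lip n y z
      _ = _ := by rw [← mul_assoc, ← mul_pow]; norm_num
  · simp only [pp, Real.dist_eq]
    linarith [abs_nonneg (y - z)]

theorem pp_eq_of_agree {X X' : ℕ → Bool} {y : ℝ} (h : ∀ i, y < (1 / 2) ^ i → X i = X' i) :
    pp X y = pp X' y := by
  unfold pp gx
  congr 2
  refine tsum_congr (fun n => ?_)
  by_cases hn : y < (1 / 2) ^ n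
  · rw [h n hn]
  · rw [tt_zero (not_lt.1 hn)]; simp

theorem tail3 (k : ℕ) : ∑' n : ℕ, (1 / 3 : ℝ) ^ (n + (k + 1) + 1) = (1 / 3) ^ (k + 1) / 2 := by
  have : ∀ n : ℕ, (1 / 3 : ℝ) ^ (n + (k + 1) + 1) = (1 / 3) ^ n * (1 / 3) ^ (k + 2) := by
    intro n; rw [← pow_add]; congr 1
  simp_rw [this]
  rw [tsum_mul_right, tsum_geometric_of_lt_one (by norm_num) (by norm_num), pow_succ _ (k + 1)]
  ring

theorem pp_eq_iff {X X' : ℕ → Bool} {y y' : ℝ} (hy : 0 ≤ y) :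
    pp X y = pp X' y' ↔ y = y' ∧ ∀ i, y < (1 / 2) ^ i → X i = X' i := by
  constructor
  swap
  · rintro ⟨rfl, h⟩; exact pp_eq_of_agree h
  intro h
  have hyy : y = y' := congrArg Prod.snd h
  subst hyy
  refine ⟨rfl, ?_⟩
  by_contra hcon
  push Not at hcon
  classical
  have hex : ∃ i, X i ≠ X' i := hcon.imp fun i hi => hi.2
  obtain ⟨j, hj, hjne⟩ := hcon
  set k := Nat.find hex with hk
  have hkne : X k ≠ X' k := Nat.find_spec hex
  have hkj : k ≤ j := Nat.find_min' hex hjne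
  have hyk : y < (1 / 2) ^ k :=
    hj.trans_le (pow_le_pow_of_le_one (by norm_num) (by norm_num) hkj)
  have hlt : ∀ i < k, X i = X' i := fun i hi => by
    by_contra hne; exact Nat.find_min hex hi hne
  have htk := tt_pos hyk
  have hgx : gx X y = gx X' y := congrArg Prod.fst h
  unfold gx at hgx
  have h0 := add_left_cancel hgx
  rw [← sub_eq_zero, ← (gx_summable X y).tsum_sub (gx_summable X' y)] at h0
  set F : ℕ → ℝ := fun n => sg (X n) * (1 / 3) ^ (n + 1) * tt n y -
    sg (X' n) * (1 / 3) ^ (n + 1) * tt n y with hF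
  have hFs : Summable F := (gx_summable X y).sub (gx_summable X' y)
  have hsplit := hFs.sum_add_tsum_nat_add (k + 1)
  rw [Finset.sum_range_succ, Finset.sum_eq_zero, zero_add, h0] at hsplit
  swap
  · intro i hi
    simp only [hF, hlt i (Finset.mem_range.1 hi), sub_self]
  have hs : Summable (fun n : ℕ => (1 / 3 : ℝ) ^ (n + (k + 1) + 1) * (2 * tt k y)) :=
    ((summable_nat_add_iff (k + 1)).2 geo3).mul_right _
  have hb : ‖∑' n, F (n + (k + 1))‖ ≤ (1 / 3) ^ (k + 1) / 2 * (2 * tt k y) := by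
    rw [← tail3, ← tsum_mul_right]
    refine tsum_of_norm_bounded hs.hasSum (fun n => ?_)
    simp only [hF]
    rw [← sub_mul, ← sub_mul, norm_mul, norm_mul, Real.norm_eq_abs, Real.norm_eq_abs,
      Real.norm_eq_abs, abs_of_nonneg (tt_nonneg _ _), abs_of_pos (by positivity : (0:ℝ) < (1/3) ^ _)]
    have h1 : |sg (X (n + (k + 1))) - sg (X' (n + (k + 1)))| ≤ 2 := by
      refine (abs_sub _ _).trans ?_
      rw [sg_abs, sg_abs]; norm_num
    have h2 : tt (n + (k + 1)) y ≤ tt k y := tt_anti (by omega) hy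
    calc _ ≤ 2 * (1 / 3) ^ (n + (k + 1) + 1) * tt k y := by
          gcongr
          exact tt_nonneg _ _
      _ = _ := by ring
  have hFk : |F k| = 2 * ((1 / 3) ^ (k + 1) * tt k y) := by
    simp only [hF]
    rw [← sub_mul, ← sub_mul, abs_mul, abs_mul, abs_of_nonneg (tt_nonneg _ _),
      abs_of_pos (by positivity : (0:ℝ) < (1/3) ^ _), mul_assoc]
    congr 1
    revert hkne
    cases X k <;> cases X' k <;> simp [sg] <;> norm_num
  have hFe : ∑' n, F (n + (k + 1)) = - F k := by linarith
  rw [hFe, norm_neg, Real.norm_eq_abs, hFk] at hb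
  have : (0:ℝ) < (1 / 3) ^ (k + 1) * tt k y := by positivity
  nlinarith

theorem gx_piece (X : ℕ → Bool) (n : ℕ) {y : ℝ} (h : y ≤ (1 / 2) ^ n)
    (h' : (1 / 2) ^ (n + 1) ≤ y) :
    gx X y = 1 / 2 + ∑ i ∈ Finset.range n, sg (X i) * (1 / 3) ^ (i + 1) +
      sg (X n) * (1 / 3) ^ (n + 1) * (2 - 2 ^ (n + 1) * y) := by
  unfold gx
  rw [tsum_eq_sum (s := Finset.range (n + 1)), Finset.sum_range_succ, tt_mid h h', add_assoc]
  · congr 2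
    refine Finset.sum_congr rfl fun i hi => ?_
    rw [tt_one, mul_one]
    exact h.trans (pow_le_pow_of_le_one (by norm_num) (by norm_num) (Finset.mem_range.1 hi))
  · intro i hi
    rw [tt_zero, mul_zero]
    refine le_trans (pow_le_pow_of_le_one (by norm_num) (by norm_num) ?_) h'
    simpa using hi

theorem tk_succ (X : ℕ → Bool) (n : ℕ) : tk X (n + 1) = tk X n ++ [X n] := by
  simp [tk, List.range_succ]

theorem tk_length (X : ℕ → Bool) (n : ℕ) : (tk X n).length = n := by simp [tk]

theorem tk_getD (X : ℕ → Bool) {n i : ℕ} (h : i < n) : (tk X n).getD i false = X i := by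
  simp [tk, h]

theorem tk_prefix (X : ℕ → Bool) {m n : ℕ} (h : m ≤ n) : tk X m <+: tk X n := by
  induction h with
  | refl => exact List.prefix_rfl
  | step _ ih => rw [tk_succ]; exact ih.trans (List.prefix_append _ _)

theorem prefix_tk {X : ℕ → Bool} {n : ℕ} {σ : List Bool} (h : σ <+: tk X n) :
    σ = tk X σ.length ∧ σ.length ≤ n := by
  have h1 : σ.length ≤ n := by simpa [tk_length] using h.length_le
  refine ⟨?_, h1⟩
  have := tk_prefix X h1
  exact (List.prefix_of_prefix_length_le h this (by simp [tk_length])).eq_of_length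
    (by simp [tk_length])

theorem tk_congr {X X' : ℕ → Bool} {n : ℕ} (h : ∀ i < n, X i = X' i) : tk X n = tk X' n := by
  unfold tk
  exact List.map_congr_left fun i hi => h i (List.mem_range.1 hi)

theorem tk_eq {X X' : ℕ → Bool} {n : ℕ} (h : tk X n = tk X' n) {i : ℕ} (hi : i < n) :
    X i = X' i := by
  rw [← tk_getD X hi, h, tk_getD X' hi]

theorem exists_tk (σ : List Bool) : ∃ X, tk X σ.length = σ := by
  refine ⟨fun i => σ.getD i false, ?_⟩
  apply List.ext_getElem
  · simp [tk]
  · intro i h1 h2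
    simp [tk, h2]

theorem psi_tk (X : ℕ → Bool) (n : ℕ) : psiPt (tk X n) =
    (1 / 2 + ∑ i ∈ Finset.range n, sg (X i) * (1 / 3) ^ (i + 1), (1 / 2) ^ n) := by
  unfold psiPt
  rw [tk_length]
  refine Prod.ext ?_ ?_
  · simp only
    have : ∑ i ∈ Finset.range n, (if (tk X n).getD i false then (3:ℝ) ^ (-((i : ℤ) + 1)) else 0)
        = ∑ i ∈ Finset.range n, (if X i then (1 / 3 : ℝ) ^ (i + 1) else 0) := by
      refine Finset.sum_congr rfl fun i hi => ?_
      rw [tk_getD X (Finset.mem_range.1 hi)]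
      congr 1
      rw [zpow_neg, one_div, inv_pow]; norm_cast
    rw [this]
    have h3 : (3:ℝ) ^ (-(n:ℤ)) = (1 / 3) ^ n := by
      rw [zpow_neg, one_div, inv_pow]; norm_cast
    rw [h3]
    clear this h3
    induction n with
    | zero => simp
    | succ n ih =>
      rw [Finset.sum_range_succ, Finset.sum_range_succ, ← add_assoc, ← ih, pow_succ]
      cases X n <;> simp [sg] <;> ring
  · simp only
    rw [zpow_neg, one_div, inv_pow]; norm_cast

theorem pp_half (X : ℕ → Bool) (n : ℕ) : pp X ((1 / 2) ^ n) = psiPt (tk X n) := by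
  rw [psi_tk]
  refine Prod.ext ?_ rfl
  simp only [pp]
  rw [gx_piece X n le_rfl (pow_le_pow_of_le_one (by norm_num) (by norm_num) (Nat.le_succ n)),
    two_half]
  ring

theorem pp_one (X : ℕ → Bool) : pp X 1 = psiPt [] := by
  have := pp_half X 0
  simpa [tk] using this

theorem pp_seg (X : ℕ → Bool) (n : ℕ) :
    segment ℝ (psiPt (tk X n)) (psiPt (tk X (n + 1))) =
      pp X '' Icc ((1 / 2) ^ (n + 1)) ((1 / 2) ^ n) := by
  have h2 := two_half n
  have hp : (0:ℝ) < (1 / 2) ^ n := by positivity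
  have hps : ((1:ℝ) / 2) ^ (n + 1) = (1 / 2) ^ n / 2 := by rw [pow_succ]; ring
  have key : ∀ t : ℝ, 0 ≤ t → t ≤ 1 →
      pp X ((1 / 2) ^ n - t * (1 / 2) ^ (n + 1)) =
        (1 - t) • psiPt (tk X n) + t • psiPt (tk X (n + 1)) := by
    intro t ht0 ht1
    rw [psi_tk, psi_tk, Finset.sum_range_succ]
    refine Prod.ext ?_ ?_
    · simp only [pp]
      rw [gx_piece X n (by nlinarith) (by nlinarith), hps]
      simp only [smul_eq_mul, Prod.fst_add, Prod.smul_fst]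
      have : (2:ℝ) ^ (n + 1) * ((1 / 2) ^ n - t * ((1 / 2) ^ n / 2)) = 2 - t := by
        rw [mul_sub, h2]; linear_combination (-t / 2) * h2
      rw [this]; ring
    · simp only [pp, smul_eq_mul, Prod.snd_add, Prod.smul_snd]
      rw [hps]; ring
  rw [segment_eq_image]
  ext q
  constructor
  · rintro ⟨t, ⟨h0, h1⟩, rfl⟩
    exact ⟨_, ⟨by nlinarith, by nlinarith⟩, key t h0 h1⟩
  · rintro ⟨y, ⟨h0, h1⟩, rfl⟩
    rw [hps] at h0
    have ha : 0 ≤ 2 - 2 * y / (1 / 2) ^ n := by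
      rw [sub_nonneg, div_le_iff₀ hp]; linarith
    have hb : 2 - 2 * y / (1 / 2) ^ n ≤ 1 := by
      rw [sub_le_comm, le_div_iff₀ hp]; linarith
    refine ⟨2 - 2 * y / (1 / 2) ^ n, ⟨ha, hb⟩, ?_⟩
    simp only
    rw [← key _ ha hb, hps]
    congr 1
    field_simp
    ring

/-- Coordinates of the points of `PsiSet T`. -/
def EE (T : Set (List Bool)) : Set ((ℕ → Bool) × ℝ) :=
  {q | 0 ≤ q.2 ∧ q.2 ≤ 1 ∧ ∀ n, q.2 < (1 / 2) ^ n → tk q.1 (n + 1) ∈ T}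

/-- uncurried parametrisation -/
def pq (q : (ℕ → Bool) × ℝ) : ℝ × ℝ := pp q.1 q.2

theorem pq_cont : Continuous pq := pp_continuous

theorem tk_continuous (n : ℕ) : @Continuous _ _ _ ⊥ (fun X : ℕ → Bool => tk X n) := by
  let : TopologicalSpace (List Bool) := ⊥
  have : DiscreteTopology (List Bool) := ⟨rfl⟩
  induction n with
  | zero => simp only [tk, List.range_zero, List.map_nil]; exact continuous_const
  | succ n ih =>
    simp only [tk_succ]
    exact (continuous_of_discreteTopology
      (f := fun z : List Bool × Bool => z.1 ++ [z.2])).comp (ih.prodMk (continuous_apply n))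

theorem EE_closed (T : Set (List Bool)) : IsClosed (EE T) := by
  let : TopologicalSpace (List Bool) := ⊥
  have : DiscreteTopology (List Bool) := ⟨rfl⟩
  have : EE T = ({q : (ℕ → Bool) × ℝ | 0 ≤ q.2} ∩ {q | q.2 ≤ 1}) ∩
      ⋂ n : ℕ, ({q | (1 / 2 : ℝ) ^ n ≤ q.2} ∪ {q | tk q.1 (n + 1) ∈ T}) := by
    ext q
    simp only [EE, mem_ofPred_eq, mem_inter_iff, mem_iInter, mem_union, ← not_lt (b := (1/2:ℝ)^_),
      and_assoc, ← imp_iff_not_or]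
  rw [this]
  refine ((isClosed_le continuous_const continuous_snd).inter
    (isClosed_le continuous_snd continuous_const)).inter (isClosed_iInter fun n => ?_)
  refine (isClosed_le continuous_const continuous_snd).union ?_
  exact (isClosed_discrete T).preimage ((tk_continuous (n + 1)).comp continuous_fst)

theorem box_compact : IsCompact ((univ : Set (ℕ → Bool)) ×ˢ Icc (0:ℝ) 1) :=
  isCompact_univ.prod isCompact_Icc

theorem EE_compact (T : Set (List Bool)) : IsCompact (EE T) :=
  box_compact.of_isClosed_subset (EE_closed T) fun _ hq => ⟨mem_univ _, hq.1, hq.2.1⟩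

theorem exists_level {y : ℝ} (h0 : 0 < y) (h1 : y ≤ 1) :
    ∃ n : ℕ, (1 / 2) ^ n ≤ y ∧ y < 2 * (1 / 2) ^ n := by
  obtain ⟨n, hn⟩ := exists_nat_pow_near_of_lt_one h0 h1 (by norm_num : (0:ℝ) < 1/2) (by norm_num)
  rcases eq_or_lt_of_le hn.2 with h | h
  · exact ⟨n, h.symm.le, by rw [h]; linarith⟩
  · refine ⟨n + 1, hn.1.le, ?_⟩
    rw [pow_succ]; linarith

theorem psiSet_eq {T : Set (List Bool)} (hT : IsTreeOfStrings T) (hne : T.Nonempty) :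
    PsiSet T = pq '' EE T := by
  have hnil : [] ∈ T := by
    obtain ⟨σ, hσ⟩ := hne
    exact hT σ hσ [] List.nil_prefix
  have hmem : ∀ X n, tk X n ∈ T → ∀ y : ℝ, (1 / 2) ^ n ≤ y → y ≤ 1 → (X, y) ∈ EE T := by
    intro X n hX y h1 h2
    refine ⟨le_trans (by positivity) h1, h2, fun m hm => ?_⟩
    refine hT _ hX _ (tk_prefix X ?_)
    by_contra hcon
    have : (1 / 2 : ℝ) ^ m ≤ (1 / 2) ^ n :=
      pow_le_pow_of_le_one (by norm_num) (by norm_num) (by omega)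
    simp only at hm
    linarith
  apply Subset.antisymm
  · refine closure_minimal ?_ ((EE_compact T).image pq_cont).isClosed
    rintro q (⟨σ, hσ, rfl⟩ | hq)
    · obtain ⟨X, hX⟩ := exists_tk σ
      rw [← hX] at hσ ⊢
      rw [← pp_half]
      exact ⟨(X, _), hmem X _ hσ _ le_rfl (pow_le_one₀ (by norm_num) (by norm_num)), rfl⟩
    · simp only [mem_iUnion] at hq
      obtain ⟨σ, hσ, hne, hq⟩ := hq
      obtain ⟨X, hX⟩ := exists_tk σ
      obtain ⟨n, hn⟩ : ∃ n, σ.length = n + 1 :=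
        ⟨σ.length - 1, by have := List.length_pos_iff.2 hne; omega⟩
      rw [hn] at hX
      subst hX
      rw [tk_succ, List.dropLast_concat, ← tk_succ, pp_seg] at hq
      obtain ⟨y, hy, rfl⟩ := hq
      exact ⟨(X, y), hmem X _ hσ y hy.1
        (hy.2.trans (pow_le_one₀ (by norm_num) (by norm_num))), rfl⟩
  · have hpos : ∀ X y, 0 < y → (X, y) ∈ EE T → pq (X, y) ∈ PsiSet T := by
      intro X y hy hX
      refine subset_closure ?_
      obtain ⟨n, hn1, hn2⟩ := exists_level hy hX.2.1
      cases n with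
      | zero =>
        left
        have : y = 1 := le_antisymm hX.2.1 (by simpa using hn1)
        subst this
        exact ⟨[], hnil, (pp_one X).symm⟩
      | succ n =>
        right
        have h2 : y < (1 / 2) ^ n := by rw [pow_succ] at hn2; linarith
        simp only [mem_iUnion]
        refine ⟨tk X (n + 1), hX.2.2 n h2, by simp [tk_succ], ?_⟩
        rw [tk_succ, List.dropLast_concat, ← tk_succ, pp_seg]
        exact ⟨y, ⟨hn1, h2.le⟩, rfl⟩
    rintro _ ⟨⟨X, y⟩, hX, rfl⟩
    rcases eq_or_lt_of_le hX.1 with h | h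
    · simp only at h
      subst h
      have hcl : IsClosed (PsiSet T) := isClosed_closure
      have ht : Filter.Tendsto (fun n : ℕ => pq (X, (1 / 2 : ℝ) ^ n)) Filter.atTop
          (nhds (pq (X, 0))) := by
        refine (pq_cont.tendsto _).comp ?_
        exact tendsto_const_nhds.prodMk_nhds
          (tendsto_pow_atTop_nhds_zero_of_lt_one (by norm_num) (by norm_num))
      refine hcl.mem_of_tendsto ht (Filter.Eventually.of_forall fun n => ?_)
      refine hpos _ _ (by positivity) ⟨by positivity, pow_le_one₀ (by norm_num) (by norm_num), ?_⟩
      intro m _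
      exact hX.2.2 m (by positivity)
    · exact hpos X y h hX

/-- coordinates of the full tree -/
def Bx : Set ((ℕ → Bool) × ℝ) := (univ : Set (ℕ → Bool)) ×ˢ Icc (0:ℝ) 1

theorem finite_levels {z : ℝ} (hz : 0 < z) : {i : ℕ | z < (1 / 2) ^ i}.Finite := by
  obtain ⟨n, hn⟩ := exists_pow_lt_of_lt_one hz (by norm_num : (1 / 2 : ℝ) < 1)
  refine (finite_Iio n).subset fun i hi => ?_
  by_contra hcon
  have : (1 / 2 : ℝ) ^ i ≤ (1 / 2) ^ n :=
    pow_le_pow_of_le_one (by norm_num) (by norm_num) (not_lt.1 hcon)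
  have hi' : z < (1 / 2) ^ i := hi
  linarith

theorem bit_clopen (b : Bool) (i : ℕ) : IsClopen {q : (ℕ → Bool) × ℝ | b = q.1 i} :=
  (isClopen_discrete {c : Bool | b = c}).preimage ((continuous_apply i).comp continuous_fst)

theorem agree_closed (X : ℕ → Bool) (z : ℝ) :
    IsClosed {q : (ℕ → Bool) × ℝ | ∀ i, z < (1 / 2) ^ i → X i = q.1 i} := by
  have : {q : (ℕ → Bool) × ℝ | ∀ i, z < (1 / 2) ^ i → X i = q.1 i} =
      ⋂ i ∈ {i : ℕ | z < (1 / 2) ^ i}, {q | X i = q.1 i} := by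
    ext q; simp
  rw [this]
  exact isClosed_biInter fun i _ => (bit_clopen (X i) i).1

theorem agree_open (X : ℕ → Bool) {z : ℝ} (hz : 0 < z) :
    IsOpen {q : (ℕ → Bool) × ℝ | ∀ i, z < (1 / 2) ^ i → X i = q.1 i} := by
  have : {q : (ℕ → Bool) × ℝ | ∀ i, z < (1 / 2) ^ i → X i = q.1 i} =
      ⋂ i ∈ {i : ℕ | z < (1 / 2) ^ i}, {q | X i = q.1 i} := by
    ext q; simp
  rw [this]
  exact (finite_levels hz).isOpen_biInter fun i _ => (bit_clopen (X i) i).2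

/-- Separation: a connected set with a point below `pp X z` and one not below contains it. -/
theorem sep {D : Set (ℝ × ℝ)} (hD : IsPreconnected D) (hsub : D ⊆ pq '' Bx)
    {X : ℕ → Bool} {y z : ℝ} (hz : 0 < z) (hy0 : 0 ≤ y) (hyz : y ≤ z) (hz1 : z ≤ 1)
    (ha : pp X y ∈ D) {X' : ℕ → Bool} {y' : ℝ} (hy0' : 0 ≤ y') (hy1' : y' ≤ 1)
    (hb : pp X' y' ∈ D) (hor : z ≤ y' ∨ ∃ i, z < (1 / 2) ^ i ∧ X i ≠ X' i) : pp X z ∈ D := by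
  set A' : Set ((ℕ → Bool) × ℝ) :=
    {q | q.2 ≤ z} ∩ {q | ∀ i, z < (1 / 2) ^ i → X i = q.1 i} with hA'
  set B' : Set ((ℕ → Bool) × ℝ) :=
    {q | z ≤ q.2} ∪ {q | ∀ i, z < (1 / 2) ^ i → X i = q.1 i}ᶜ with hB'
  have hAc : IsClosed A' := (isClosed_le continuous_snd continuous_const).inter (agree_closed X z)
  have hBc : IsClosed B' :=
    (isClosed_le continuous_const continuous_snd).union (agree_open X hz).isClosed_compl
  have hAk : IsClosed (pq '' (Bx ∩ A')) :=
    ((box_compact.inter_right hAc).image pq_cont).isClosed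
  have hBk : IsClosed (pq '' (Bx ∩ B')) :=
    ((box_compact.inter_right hBc).image pq_cont).isClosed
  have key := isPreconnected_closed_iff.1 hD _ _ hAk hBk ?_ ?_ ?_
  · obtain ⟨w, hwD, ⟨q1, ⟨hq1, hq1A⟩, h1⟩, ⟨q2, ⟨hq2, hq2B⟩, h2⟩⟩ := key
    have heq : pp q1.1 q1.2 = pp q2.1 q2.2 := h1.trans h2.symm
    obtain ⟨he, hbits⟩ := (pp_eq_iff hq1.2.1).1 heq
    have hA1 : q1.2 ≤ z := hq1A.1
    have hA2 : ∀ i, z < (1 / 2) ^ i → X i = q1.1 i := hq1A.2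
    have hag : ∀ i, z < (1 / 2) ^ i → X i = q2.1 i := fun i hi =>
      (hA2 i hi).trans (hbits i (hA1.trans_lt hi))
    have hz2 : z ≤ q2.2 := by
      rcases hq2B with h | h
      · exact h
      · exact absurd hag h
    have hzz : q2.2 = z := le_antisymm (he ▸ hA1) hz2
    have : pp X z = pp q2.1 q2.2 := by
      rw [hzz]; exact pp_eq_of_agree hag
    rw [this]
    change pq q2 ∈ D
    rw [h2]; exact hwD
  · intro d hd
    obtain ⟨q, hq, rfl⟩ := hsub hd
    by_cases h : q ∈ B'
    · exact Or.inr ⟨q, ⟨hq, h⟩, rfl⟩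
    · refine Or.inl ⟨q, ⟨hq, ?_⟩, rfl⟩
      simp only [hB', mem_union, not_or, mem_compl_iff, not_not] at h
      have h1 : ¬ z ≤ q.2 := h.1
      exact ⟨show q.2 ≤ z from (not_le.1 h1).le, h.2⟩
  · exact ⟨_, ha, (X, y), ⟨⟨mem_univ _, hy0, hyz.trans hz1⟩, hyz, fun _ _ => rfl⟩, rfl⟩
  · refine ⟨_, hb, (X', y'), ⟨⟨mem_univ _, hy0', hy1'⟩, ?_⟩, rfl⟩
    rcases hor with h | ⟨i, hi, hne⟩
    · exact Or.inl h
    · exact Or.inr fun h => hne (h i hi)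

theorem exists_sep {X X' : ℕ → Bool} {y y' : ℝ} (hyy : y ≤ y') (hne : pp X y ≠ pp X' y') :
    ∃ z, y < z ∧ z ≠ y' ∧ (z < y' ∨ z < 1) ∧
      (z ≤ y' ∨ ∃ i, z < (1 / 2) ^ i ∧ X i ≠ X' i) := by
  rcases eq_or_lt_of_le hyy with h | h
  · subst h
    have : ∃ i, y < (1 / 2) ^ i ∧ X i ≠ X' i := by
      by_contra hcon
      push Not at hcon
      exact hne (pp_eq_of_agree hcon)
    obtain ⟨i, hi, hxi⟩ := this
    have h1 : (1 / 2 : ℝ) ^ i ≤ 1 := pow_le_one₀ (by norm_num) (by norm_num)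
    refine ⟨(y + (1 / 2) ^ i) / 2, by linarith, by linarith, Or.inr (by linarith),
      Or.inr ⟨i, by linarith, hxi⟩⟩
  · exact ⟨(y + y') / 2, by linarith, by linarith, Or.inl (by linarith), Or.inl (by linarith)⟩

theorem sphere_punctured (v : sphere (0 : EuclideanSpace ℝ (Fin 2)) 1) :
    IsPreconnected ({v}ᶜ : Set (sphere (0 : EuclideanSpace ℝ (Fin 2)) 1)) := by
  have : Fact (Module.finrank ℝ (EuclideanSpace ℝ (Fin 2)) = 1 + 1) := ⟨by simp⟩
  have h := (stereographic' 1 v).symm_image_target_eq_source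
  rw [stereographic'_source, stereographic'_target] at h
  rw [← h]
  refine isPreconnected_univ.image _ ?_
  have := (stereographic' 1 v).continuousOn_symm
  rwa [stereographic'_target] at this

theorem circle_punctured (v : unitCircle) : IsPreconnected ({v}ᶜ : Set unitCircle) :=
  sphere_punctured v

theorem circle_whole : IsPreconnected (univ : Set unitCircle) := by
  have h : IsPreconnected unitCircle := by
    unfold unitCircle
    refine isPreconnected_sphere ?_ _ _
    rw [← Module.finrank_eq_rank]
    simp
  exact isPreconnected_iff_preconnectedSpace.1 h |>.isPreconnected_univ

theorem circle_two : ∃ u v : unitCircle, u ≠ v := by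
  refine ⟨⟨EuclideanSpace.single 0 1, by simp [unitCircle]⟩,
    ⟨EuclideanSpace.single 1 1, by simp [unitCircle]⟩, ?_⟩
  intro h
  have h2 := congrArg (fun x : unitCircle => (x : EuclideanSpace ℝ (Fin 2)) 0) h
  simp at h2

theorem no_circle {C : Set (ℝ × ℝ)} (hC : C ⊆ pq '' Bx) : IsEmpty (↥C ≃ₜ ↥unitCircle) := by
  refine ⟨fun e => ?_⟩
  have hCp : IsPreconnected C := by
    have h1 := (circle_whole.image e.symm e.symm.continuous.continuousOn).image Subtype.val
      continuous_subtype_val.continuousOn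
    rwa [image_univ, e.symm.surjective.range_eq, image_univ, Subtype.range_coe] at h1
  have hCw : ∀ w, w ∈ C → IsPreconnected (C \ {w}) := by
    intro w hw
    have h1 := ((circle_punctured (e ⟨w, hw⟩)).image e.symm
      e.symm.continuous.continuousOn).image Subtype.val continuous_subtype_val.continuousOn
    convert h1 using 1
    ext x
    constructor
    · rintro ⟨hx, hxw⟩
      refine ⟨⟨x, hx⟩, ⟨e ⟨x, hx⟩, ?_, by simp⟩, rfl⟩
      intro h
      have h' : e ⟨x, hx⟩ = e ⟨w, hw⟩ := h
      exact hxw (congrArg Subtype.val (e.injective h'))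
    · rintro ⟨_, ⟨c, hc, rfl⟩, rfl⟩
      refine ⟨Subtype.coe_prop _, fun h => hc ?_⟩
      have : e.symm c = ⟨w, hw⟩ := Subtype.ext h
      change c = _
      rw [← this]; simp
  have main : ∀ a b : ℝ × ℝ, a ∈ C → b ∈ C → a ≠ b → a.2 ≤ b.2 → False := by
    intro a b ha hb hab hle
    obtain ⟨⟨X, y⟩, hq, rfl⟩ := hC ha
    obtain ⟨⟨X', y'⟩, hq', rfl⟩ := hC hb
    have hle' : y ≤ y' := hle
    obtain ⟨z, h1, h2, h3, h4⟩ := exists_sep hle' hab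
    have hy0 : 0 ≤ y := hq.2.1
    have hy0' : 0 ≤ y' := hq'.2.1
    have hy1' : y' ≤ 1 := hq'.2.2
    have hz1 : z ≤ 1 := by rcases h3 with h | h <;> linarith
    have hz : 0 < z := by linarith
    have hw := sep hCp hC hz hy0 h1.le hz1 ha hy0' hy1' hb h4
    have hw2 := sep (hCw _ hw) (sdiff_subset.trans hC) hz hy0 h1.le hz1
      ⟨ha, fun h => h1.ne (congrArg Prod.snd h)⟩ hy0' hy1'
      ⟨hb, fun h => h2 (congrArg Prod.snd h).symm⟩ h4
    exact hw2.2 rfl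
  obtain ⟨u, v, huv⟩ := circle_two
  have hne : (e.symm u : ℝ × ℝ) ≠ e.symm v := fun h => huv (e.symm.injective (Subtype.ext h))
  rcases le_total (e.symm u : ℝ × ℝ).2 (e.symm v : ℝ × ℝ).2 with h | h
  · exact main _ _ (Subtype.coe_prop _) (Subtype.coe_prop _) hne h
  · exact main _ _ (Subtype.coe_prop _) (Subtype.coe_prop _) hne.symm h

theorem pp_cont (X : ℕ → Bool) : Continuous (pp X) :=
  pq_cont.comp (continuous_const.prodMk continuous_id)

theorem branch_preconn (X : ℕ → Bool) (a b : ℝ) : IsPreconnected (pp X '' Icc a b) :=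
  isPreconnected_Icc.image _ (pp_cont X).continuousOn

theorem conn_of_up {E : Set ((ℕ → Bool) × ℝ)} (hE : E ⊆ Bx)
    (hup : ∀ X y z, (X, y) ∈ E → y ≤ z → z ≤ 1 → (X, z) ∈ E) (hne : E.Nonempty) :
    IsConnected (pq '' E) := by
  refine ⟨hne.image _, isPreconnected_of_forall (psiPt []) ?_⟩
  rintro _ ⟨⟨X, y⟩, hX, rfl⟩
  have hy : y ≤ 1 := (hE hX).2.2
  refine ⟨pp X '' Icc y 1, ?_, ⟨1, ⟨hy, le_rfl⟩, pp_one X⟩, ⟨y, ⟨le_rfl, hy⟩, rfl⟩,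
    branch_preconn X y 1⟩
  rintro _ ⟨z, hz, rfl⟩
  exact ⟨(X, z), hup X y z hX hz.1 hz.2, rfl⟩

theorem locconn_of_up {E : Set ((ℕ → Bool) × ℝ)} (hE : E ⊆ Bx) (hEc : IsClosed E)
    (hup : ∀ X y z, (X, y) ∈ E → y ≤ z → z ≤ 1 → (X, z) ∈ E) :
    LocallyConnectedSpace ↥(pq '' E) := by
  rw [locallyConnectedSpace_iff_connected_subsets]
  rintro ⟨x, hx⟩ U hU
  obtain ⟨⟨X, y⟩, hXE, hxq⟩ := id hx
  have hxq' : pp X y = x := hxq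
  subst hxq'
  have hy0 : 0 ≤ y := (hE hXE).2.1
  have hy1 : y ≤ 1 := (hE hXE).2.2
  obtain ⟨δ, hδ, hball⟩ := Metric.mem_nhds_iff.1 hU
  obtain ⟨ε, hε, hεδ⟩ : ∃ ε : ℝ, 0 < ε ∧ 6 * ε < δ := ⟨δ / 7, by positivity, by linarith⟩
  set N : Set (ℝ × ℝ) := {r | ∃ X' y' z, r = pp X' y' ∧ (X', y') ∈ E ∧ y ≤ z ∧ y' ≤ z ∧ z ≤ 1 ∧
    z < y + ε ∧ z < y' + 2 * ε ∧ pp X z = pp X' z} with hN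
  have hNC : N ⊆ pq '' E := by
    rintro r ⟨X', y', z, rfl, h, -⟩
    exact ⟨_, h, rfl⟩
  have hxN : pp X y ∈ N := ⟨X, y, y, rfl, hXE, le_rfl, le_rfl, hy1, by linarith, by linarith, rfl⟩
  have hNp : IsPreconnected N := by
    refine isPreconnected_of_forall (pp X y) ?_
    rintro r ⟨X', y', z, rfl, h, h1, h2, h3, h4, h5, h6⟩
    refine ⟨pp X '' Icc y z ∪ pp X' '' Icc y' z, ?_, Or.inl ⟨y, ⟨le_rfl, h1⟩, rfl⟩,
      Or.inr ⟨y', ⟨le_rfl, h2⟩, rfl⟩, ?_⟩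
    · rintro _ (⟨w, hw, rfl⟩ | ⟨w, hw, rfl⟩)
      · exact ⟨X, w, z, rfl, hup _ _ _ hXE hw.1 (hw.2.trans h3), h1, hw.2, h3, h4,
          by linarith [hw.1], rfl⟩
      · exact ⟨X', w, z, rfl, hup _ _ _ h hw.1 (hw.2.trans h3), h1, hw.2, h3, h4,
          by linarith [hw.1], h6⟩
    · exact IsPreconnected.union (pp X z) ⟨z, ⟨h1, le_rfl⟩, rfl⟩
        ⟨z, ⟨h2, le_rfl⟩, h6.symm⟩ (branch_preconn _ _ _) (branch_preconn _ _ _)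
  refine ⟨Subtype.val ⁻¹' N, ?_, ?_, ?_⟩
  · set G : Set ((ℕ → Bool) × ℝ) := {q | |q.2 - y| < ε} ∩
      {q | ∀ i, y + ε / 2 < (1 / 2) ^ i → X i = q.1 i} with hG
    have hGo : IsOpen G := by
      refine IsOpen.inter ?_ (agree_open X (by linarith))
      exact isOpen_lt (by fun_prop) continuous_const
    have hcl : IsClosed (pq '' (E \ G)) := by
      refine IsCompact.isClosed (IsCompact.image ?_ pq_cont)
      exact box_compact.of_isClosed_subset (hEc.sdiff hGo) (sdiff_subset.trans hE)
    have hop : IsOpen ((Subtype.val : ↥(pq '' E) → ℝ × ℝ) ⁻¹' (pq '' (E \ G))ᶜ) :=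
      hcl.isOpen_compl.preimage continuous_subtype_val
    refine Filter.mem_of_superset (hop.mem_nhds ?_) ?_
    · rintro ⟨⟨X', y'⟩, ⟨hE', hnG⟩, heq⟩
      have heq' : pp X y = pp X' y' := heq.symm
      obtain ⟨rfl, hb⟩ := (pp_eq_iff hy0).1 heq'
      refine hnG ⟨by simpa using hε, fun i hi => hb i (by linarith)⟩
    · rintro ⟨r, hr⟩ hr'
      obtain ⟨⟨X', y'⟩, hE', rfl⟩ := id hr
      have hg : (X', y') ∈ G := by
        by_contra hcon
        exact hr' ⟨_, ⟨hE', hcon⟩, rfl⟩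
      have hd : |y' - y| < ε := hg.1
      rw [abs_lt] at hd
      have hb : ∀ i, y + ε / 2 < (1 / 2) ^ i → X i = X' i := hg.2
      have hy1' : y' ≤ 1 := (hE hE').2.2
      have hm : max y' (y + ε / 2) < y + ε := max_lt (by linarith) (by linarith)
      have hm2 : max y' (y + ε / 2) < y' + 2 * ε := max_lt (by linarith) (by linarith)
      refine ⟨X', y', min 1 (max y' (y + ε / 2)), rfl, hE', ?_, ?_, min_le_left _ _,
        (min_le_right _ _).trans_lt hm, (min_le_right _ _).trans_lt hm2, ?_⟩
      · exact le_min hy1 (le_max_of_le_right (by linarith))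
      · exact le_min hy1' (le_max_left _ _)
      · refine pp_eq_of_agree fun i hi => hb i ?_
        have h1 : (1 / 2 : ℝ) ^ i ≤ 1 := pow_le_one₀ (by norm_num) (by norm_num)
        rcases min_lt_iff.1 hi with h | h
        · linarith
        · exact (le_max_right _ _).trans_lt h
  · rw [← Topology.IsInducing.subtypeVal.isPreconnected_image, Subtype.image_preimage_coe,
      inter_eq_self_of_subset_right hNC]
    exact hNp
  · rintro ⟨r, hr⟩ ⟨X', y', z, rfl, h, h1, h2, h3, h4, h5, h6⟩
    refine hball ?_
    rw [Metric.mem_ball, Subtype.dist_eq]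
    have e1 := pp_lip X z y
    have e2 := pp_lip X' y' z
    rw [h6] at e1
    have e3 := dist_triangle (pp X' y') (pp X' z) (pp X y)
    rw [abs_of_nonneg (by linarith)] at e1
    rw [abs_of_nonpos (by linarith)] at e2
    simp only
    linarith

theorem EE_sub (S : Set (List Bool)) : EE S ⊆ Bx := fun _ hq => ⟨mem_univ _, hq.1, hq.2.1⟩

theorem EE_up (S : Set (List Bool)) (X : ℕ → Bool) (y z : ℝ) (h : (X, y) ∈ EE S) (hyz : y ≤ z)
    (hz : z ≤ 1) : (X, z) ∈ EE S :=
  ⟨le_trans h.1 hyz, hz, fun n hn => h.2.2 n (lt_of_le_of_lt hyz hn)⟩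

theorem EE_nonempty (S : Set (List Bool)) : (EE S).Nonempty := by
  refine ⟨(fun _ => false, 1), zero_le_one, le_rfl, fun n hn => ?_⟩
  have h1 : (1 / 2 : ℝ) ^ n ≤ 1 := pow_le_one₀ (by norm_num) (by norm_num)
  exact absurd hn (not_lt.2 h1)

theorem easy_direction {D : Set (ℝ × ℝ)} {S T : Set (List Bool)} (hT : IsTreeOfStrings T)
    (hTne : T.Nonempty) (hsub : D ⊆ PsiSet T) (hSne : S.Nonempty) (hS : IsTreeOfStrings S)
    (e : ↥D ≃ₜ ↥(PsiSet S)) : IsDendrite D := by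
  rw [psiSet_eq hT hTne] at hsub
  rw [psiSet_eq hS hSne] at e
  have h1 : CompactSpace ↥(pq '' EE S) :=
    isCompact_iff_compactSpace.1 ((EE_compact S).image pq_cont)
  have h2 : ConnectedSpace ↥(pq '' EE S) :=
    isConnected_iff_connectedSpace.1 (conn_of_up (EE_sub S) (EE_up S) (EE_nonempty S))
  have h3 : LocallyConnectedSpace ↥(pq '' EE S) :=
    locconn_of_up (EE_sub S) (EE_closed S) (EE_up S)
  refine ⟨⟨?_, ?_⟩, e.locallyConnectedSpace, fun C hC => ?_⟩
  · exact isCompact_iff_compactSpace.2 e.symm.compactSpace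
  · exact isConnected_iff_connectedSpace.2 (e.symm.surjective.connectedSpace e.symm.continuous)
  · exact no_circle (hC.trans (hsub.trans (image_mono (EE_sub T))))

/-- Two quotients of a compact space by the same relation are homeomorphic. -/
theorem homeo_of_fibers {K A B : Type*} [TopologicalSpace K] [CompactSpace K]
    [TopologicalSpace A] [T2Space A] [TopologicalSpace B] [T2Space B] {u : K → A} {v : K → B}
    (hu : Continuous u) (hv : Continuous v) (hus : Function.Surjective u)
    (hvs : Function.Surjective v) (h : ∀ x y, u x = u y ↔ v x = v y) : Nonempty (A ≃ₜ B) := by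
  have qu : Topology.IsQuotientMap u := hu.isClosedMap.isQuotientMap hu hus
  have qv : Topology.IsQuotientMap v := hv.isClosedMap.isQuotientMap hv hvs
  let U : C(K, A) := ⟨u, hu⟩
  let V : C(K, B) := ⟨v, hv⟩
  have e1 : Quotient (Setoid.ker u) ≃ₜ A := Topology.IsQuotientMap.homeomorph (f := U) qu
  have e2 : Quotient (Setoid.ker v) ≃ₜ B := Topology.IsQuotientMap.homeomorph (f := V) qv
  have e3 : Quotient (Setoid.ker u) ≃ₜ Quotient (Setoid.ker v) :=
    Homeomorph.Quotient.congrRight h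
  exact ⟨e1.symm.trans (e3.trans e2)⟩

theorem pow_gap {k i : ℕ} (h : (1 / 2 : ℝ) ^ k < (1 / 2) ^ i) :
    2 * (1 / 2 : ℝ) ^ k ≤ (1 / 2) ^ i := by
  have hik : i + 1 ≤ k := by
    by_contra hcon
    have : (1 / 2 : ℝ) ^ i ≤ (1 / 2) ^ k :=
      pow_le_pow_of_le_one (by norm_num) (by norm_num) (by omega)
    linarith
  have : (1 / 2 : ℝ) ^ k ≤ (1 / 2) ^ (i + 1) :=
    pow_le_pow_of_le_one (by norm_num) (by norm_num) hik
  rw [pow_succ] at this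
  linarith

/-- stretching coefficient -/
def ek (k : ℕ) (h : ℝ) : ℝ := min 1 (max 0 (2 ^ k * h - 1))

/-- stretching map on a branch whose lowest point has height `h` -/
def fh (h y : ℝ) : ℝ := y + ∑' k : ℕ, max 0 (2 * (1 / 2) ^ k - y) * ek k h

/-- domain of the stretching map -/
def dom (h y : ℝ) : Prop := 0 ≤ y ∧ y ≤ 1 ∧ ∀ n : ℕ, y < (1 / 2) ^ n → h < (1 / 2) ^ n

theorem two_half0 (n : ℕ) : (2:ℝ) ^ n * (1 / 2) ^ n = 1 := by
  rw [← mul_pow]; norm_num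

theorem ek_max (k : ℕ) (h : ℝ) : ek k h = ek k (max h ((1 / 2) ^ k)) := by
  unfold ek
  have : (2:ℝ) ^ k * max h ((1 / 2) ^ k) - 1 = max (2 ^ k * h - 1) 0 := by
    rw [mul_max_of_nonneg _ _ (by positivity), two_half0, ← sub_self (1:ℝ), max_sub_sub_right]
  rw [this, max_comm _ (0:ℝ), ← max_assoc, max_self]

theorem ek_zero {k : ℕ} {h : ℝ} (hk : h ≤ (1 / 2) ^ k) : ek k h = 0 := by
  have : (2:ℝ) ^ k * h ≤ 2 ^ k * (1 / 2) ^ k := by gcongr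
  rw [two_half0] at this
  unfold ek
  rw [max_eq_left (by linarith)]; simp

theorem fh_spec {h : ℝ} (h0 : 0 ≤ h) (h1 : h ≤ 1) : ∃ a c : ℝ, 0 ≤ a ∧ a ≤ h ∧
    (c = 0 ∨ ∃ m : ℕ, a = (1 / 2) ^ m) ∧ (2 * a ≤ 1 ∨ c = 0) ∧ h ≤ 2 * a ∧
    (∀ y, dom h y ↔ a ≤ y ∧ y ≤ 1) ∧ 0 ≤ c ∧ c < 1 ∧ c * a = h - a ∧
    ∀ y, a ≤ y → fh h y = y + max 0 (2 * a - y) * c := by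
  rcases eq_or_lt_of_le h0 with hh | hpos
  · subst hh
    refine ⟨0, 0, le_rfl, le_rfl, Or.inl rfl, Or.inr rfl, by simp, ?_, le_rfl, one_pos, by simp, ?_⟩
    · intro y
      exact ⟨fun hd => ⟨hd.1, hd.2.1⟩, fun hd => ⟨hd.1, hd.2, fun n _ => by positivity⟩⟩
    · intro y _
      have : ∀ k : ℕ, max 0 (2 * (1 / 2) ^ k - y) * ek k 0 = 0 := fun k => by
        rw [ek_zero (by positivity), mul_zero]
      unfold fh; simp_rw [this]; simp
  · obtain ⟨m, hm1, hm2⟩ := exists_level hpos h1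
    have hp : (0:ℝ) < 2 ^ m := by positivity
    have hq : (0:ℝ) < (1 / 2) ^ m := by positivity
    have ht := two_half0 m
    have hc0 : 0 ≤ 2 ^ m * h - 1 := by
      have : (2:ℝ) ^ m * (1 / 2) ^ m ≤ 2 ^ m * h := by gcongr
      linarith
    have hc1 : 2 ^ m * h - 1 < 1 := by
      have : (2:ℝ) ^ m * h < 2 ^ m * (2 * (1 / 2) ^ m) := by gcongr
      linarith
    refine ⟨(1 / 2) ^ m, 2 ^ m * h - 1, hq.le, hm1, Or.inr ⟨m, rfl⟩, ?_, hm2.le, ?_, hc0, hc1,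
      ?_, ?_⟩
    · cases m with
      | zero => right; simp only [pow_zero] at *; linarith
      | succ m =>
        left
        have : (1 / 2 : ℝ) ^ m ≤ 1 := pow_le_one₀ (by norm_num) (by norm_num)
        rw [pow_succ]; linarith
    · intro y
      constructor
      · intro hd
        refine ⟨?_, hd.2.1⟩
        by_contra hcon
        have := hd.2.2 m (not_le.1 hcon)
        linarith
      · rintro ⟨ha, hb⟩
        refine ⟨hq.le.trans ha, hb, fun n hn => ?_⟩
        have := pow_gap (ha.trans_lt hn)
        linarith
    · linear_combination h * ht
    · intro y hy
      unfold fh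
      rw [tsum_eq_single m]
      · congr 2
        unfold ek
        rw [max_eq_right hc0, min_eq_right hc1.le]
      · intro k hk
        rcases lt_or_gt_of_ne hk with hlt | hgt
        · have h2 : (1 / 2 : ℝ) ^ m < (1 / 2) ^ k :=
            pow_lt_pow_right_of_lt_one₀ (by norm_num) (by norm_num) hlt
          rw [ek_zero (by linarith [pow_gap h2]), mul_zero]
        · have h2 : (1 / 2 : ℝ) ^ k < (1 / 2) ^ m :=
            pow_lt_pow_right_of_lt_one₀ (by norm_num) (by norm_num) hgt
          rw [max_eq_left (by linarith [pow_gap h2]), zero_mul]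

theorem fh_range {h y : ℝ} (h0 : 0 ≤ h) (h1 : h ≤ 1) (hd : dom h y) :
    h ≤ fh h y ∧ fh h y ≤ 1 ∧ y ≤ fh h y := by
  obtain ⟨a, c, ha0, hah, -, hac, hh2, hdom, hc0, hc1, hca, hf⟩ := fh_spec h0 h1
  obtain ⟨hay, hy1⟩ := (hdom y).1 hd
  rw [hf y hay]
  rcases le_total (2 * a) y with hl | hl
  · rw [max_eq_left (by linarith)]
    refine ⟨by linarith, by linarith, by linarith⟩
  · rw [max_eq_right (by linarith)]
    refine ⟨by nlinarith, ?_, by nlinarith⟩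
    rcases hac with h | h
    · nlinarith
    · rw [h]; linarith

theorem fh_mono {h y y' : ℝ} (h0 : 0 ≤ h) (h1 : h ≤ 1) (hd : dom h y) (hd' : dom h y')
    (hlt : y < y') : fh h y < fh h y' := by
  obtain ⟨a, c, ha0, hah, -, hac, hh2, hdom, hc0, hc1, hca, hf⟩ := fh_spec h0 h1
  rw [hf y ((hdom y).1 hd).1, hf y' ((hdom y').1 hd').1]
  have : max 0 (2 * a - y) - max 0 (2 * a - y') ≤ y' - y := by
    rcases max_cases 0 (2 * a - y) with h | h <;> rcases max_cases 0 (2 * a - y') with h' | h' <;>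
      linarith
  have h2 : max 0 (2 * a - y') ≤ max 0 (2 * a - y) := max_le_max_left _ (by linarith)
  nlinarith

theorem fh_level {h y : ℝ} (h0 : 0 ≤ h) (h1 : h ≤ 1) (hd : dom h y) (i : ℕ) :
    fh h y < (1 / 2) ^ i ↔ y < (1 / 2) ^ i := by
  refine ⟨fun hlt => (fh_range h0 h1 hd).2.2.trans_lt hlt, fun hlt => ?_⟩
  obtain ⟨a, c, ha0, hah, hm, hac, hh2, hdom, hc0, hc1, hca, hf⟩ := fh_spec h0 h1
  obtain ⟨hay, hy1⟩ := (hdom y).1 hd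
  rw [hf y hay]
  rcases le_or_gt (2 * a) y with hl | hl
  · rw [max_eq_left (by linarith)]; linarith
  · rw [max_eq_right (by linarith)]
    rcases hm with rfl | ⟨m, rfl⟩
    · linarith
    · have := pow_gap (hay.trans_lt hlt)
      nlinarith

theorem fh_surj {h v : ℝ} (h0 : 0 ≤ h) (h1 : h ≤ 1) (hv : h ≤ v) (hv1 : v ≤ 1) :
    ∃ y, dom h y ∧ fh h y = v := by
  obtain ⟨a, c, ha0, hah, -, hac, hh2, hdom, hc0, hc1, hca, hf⟩ := fh_spec h0 h1
  rcases le_total (2 * a) v with hl | hl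
  · refine ⟨v, (hdom v).2 ⟨by linarith, hv1⟩, ?_⟩
    rw [hf v (by linarith), max_eq_left (by linarith)]; ring
  · have hc : 0 < 1 - c := by linarith
    set y := (v - 2 * a * c) / (1 - c) with hy
    have hyc : y * (1 - c) = v - 2 * a * c := by rw [hy]; field_simp
    have hay : a ≤ y := by rw [hy, le_div_iff₀ hc]; nlinarith
    have hy2 : y ≤ 2 * a := by rw [hy, div_le_iff₀ hc]; nlinarith
    have hyv : y ≤ v := by nlinarith
    refine ⟨y, (hdom y).2 ⟨hay, by linarith⟩, ?_⟩
    rw [hf y hay, max_eq_right (by linarith)]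
    linarith

theorem hard_direction {D : Set (ℝ × ℝ)} {T : Set (List Bool)} (hT : IsTreeOfStrings T)
    (hTne : T.Nonempty) (hsub : D ⊆ PsiSet T) (hroot : psiPt [] ∈ D) (hDk : IsCompact D)
    (hDp : IsPreconnected D) :
    ∃ S : Set (List Bool), S.Nonempty ∧ IsTreeOfStrings S ∧ S ⊆ T ∧
      Nonempty (↥D ≃ₜ ↥(PsiSet S)) := by
  rw [psiSet_eq hT hTne] at hsub
  have hDB : D ⊆ pq '' Bx := hsub.trans (image_mono (EE_sub T))
  have hex : ∀ X : ℕ → Bool, ∃ h : ℝ, 0 ≤ h ∧ h ≤ 1 ∧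
      ∀ y, 0 ≤ y → y ≤ 1 → (pp X y ∈ D ↔ h ≤ y) := by
    intro X
    have hZc : IsCompact (Icc (0:ℝ) 1 ∩ pp X ⁻¹' D) :=
      isCompact_Icc.inter_right (hDk.isClosed.preimage (pp_cont X))
    have hZn : (Icc (0:ℝ) 1 ∩ pp X ⁻¹' D).Nonempty :=
      ⟨1, ⟨zero_le_one, le_rfl⟩, by rw [mem_preimage, pp_one]; exact hroot⟩
    obtain ⟨h, ⟨hI, hm⟩, hle⟩ := hZc.exists_isLeast hZn
    refine ⟨h, hI.1, hI.2, fun y hy0 hy1 => ⟨fun hy => hle ⟨⟨hy0, hy1⟩, hy⟩, fun hy => ?_⟩⟩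
    rcases eq_or_lt_of_le hy with rfl | hlt
    · exact hm
    · exact sep hDp hDB (lt_of_le_of_lt hI.1 hlt) hI.1 hy hy1 hm zero_le_one le_rfl
        (X' := X) (by rw [pp_one]; exact hroot) (Or.inl hy1)
  choose h h0 h1 hmem using hex
  have hle : ∀ X X' : ℕ → Bool, ∀ c : ℝ, 0 ≤ c → c ≤ 1 →
      (∀ i, c < (1 / 2) ^ i → X i = X' i) → max (h X') c ≤ max (h X) c := by
    intro X X' c hc0 hc1 hag
    refine max_le ?_ (le_max_right _ _)
    have hm0 : 0 ≤ max (h X) c := le_max_of_le_right hc0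
    have hm1 : max (h X) c ≤ 1 := max_le (h1 X) hc1
    rw [← hmem X' _ hm0 hm1]
    have : pp X (max (h X) c) = pp X' (max (h X) c) :=
      pp_eq_of_agree fun i hi => hag i ((le_max_right _ _).trans_lt hi)
    rw [← this, hmem X _ hm0 hm1]
    exact le_max_left _ _
  have heq : ∀ X X' : ℕ → Bool, ∀ c : ℝ, 0 ≤ c → c ≤ 1 →
      (∀ i, c < (1 / 2) ^ i → X i = X' i) → max (h X) c = max (h X') c :=
    fun X X' c hc0 hc1 hag => le_antisymm
      (hle X' X c hc0 hc1 fun i hi => (hag i hi).symm) (hle X X' c hc0 hc1 hag)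
  have hpow1 : ∀ n : ℕ, (1 / 2 : ℝ) ^ n ≤ 1 := fun n => pow_le_one₀ (by norm_num) (by norm_num)
  have hpowlt : ∀ {i j : ℕ}, (1 / 2 : ℝ) ^ j < (1 / 2) ^ i → i < j := by
    intro i j hij
    by_contra hcon
    have : (1 / 2 : ℝ) ^ i ≤ (1 / 2) ^ j :=
      pow_le_pow_of_le_one (by norm_num) (by norm_num) (by omega)
    linarith
  set S : Set (List Bool) :=
    {σ | σ = [] ∨ ∃ X n, σ = tk X (n + 1) ∧ h X < (1 / 2) ^ n} with hS
  have hmemS : ∀ X n, tk X (n + 1) ∈ S ↔ h X < (1 / 2) ^ n := by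
    intro X n
    constructor
    · rintro (hnil | ⟨X', n', he, hlt⟩)
      · simp [tk_succ] at hnil
      · have hn : n = n' := by
          have := congrArg List.length he
          simpa [tk_length] using this
        subst hn
        have h2 := heq X X' ((1 / 2) ^ (n + 1)) (by positivity) (hpow1 _)
          fun i hi => tk_eq he (hpowlt hi)
        have h3 : (1 / 2 : ℝ) ^ (n + 1) < (1 / 2) ^ n :=
          pow_lt_pow_right_of_lt_one₀ (by norm_num) (by norm_num) (Nat.lt_succ_self n)
        calc h X ≤ max (h X) ((1 / 2) ^ (n + 1)) := le_max_left _ _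
          _ = _ := h2
          _ < _ := max_lt hlt h3
    · intro hlt
      exact Or.inr ⟨X, n, rfl, hlt⟩
  have hStree : IsTreeOfStrings S := by
    rintro σ (rfl | ⟨X, n, rfl, hlt⟩) τ hτ
    · left; exact List.prefix_nil.1 hτ
    · obtain ⟨h2, h3⟩ := prefix_tk hτ
      rcases Nat.eq_zero_or_pos τ.length with hz | hp
      · left; exact List.length_eq_zero_iff.1 hz
      · right
        refine ⟨X, τ.length - 1, ?_, hlt.trans_le ?_⟩
        · rw [Nat.sub_add_cancel hp]; exact h2
        · exact pow_le_pow_of_le_one (by norm_num) (by norm_num) (by omega)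
  have hSne : S.Nonempty := ⟨[], Or.inl rfl⟩
  have hST : S ⊆ T := by
    rintro σ (rfl | ⟨X, n, rfl, hlt⟩)
    · obtain ⟨σ, hσ⟩ := hTne
      exact hT σ hσ [] List.nil_prefix
    · have hD : pp X (h X) ∈ D := (hmem X _ (h0 X) (h1 X)).2 le_rfl
      obtain ⟨⟨X', y⟩, hE, hq⟩ := hsub hD
      have hq' : pp X (h X) = pp X' y := hq.symm
      obtain ⟨hy, hag⟩ := (pp_eq_iff (h0 X)).1 hq'
      subst hy
      have hT' : tk X' (n + 1) ∈ T := hE.2.2 n hlt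
      rwa [tk_congr (X := X) (X' := X') fun i hi => hag i (hlt.trans_le
        (pow_le_pow_of_le_one (by norm_num) (by norm_num) (by omega)))]
  refine ⟨S, hSne, hStree, hST, ?_⟩
  rw [psiSet_eq hStree hSne]
  have hdom : ∀ X y, (X, y) ∈ EE S ↔ dom (h X) y := by
    intro X y
    simp only [EE, mem_ofPred_eq, dom, hmemS]
  have : CompactSpace ↥(EE S) := isCompact_iff_compactSpace.1 (EE_compact S)
  have hwd : ∀ X X' y, 0 ≤ y → (∀ i, y < (1 / 2) ^ i → X i = X' i) →
      fh (h X) y = fh (h X') y := by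
    intro X X' y hy0 hag
    unfold fh
    congr 1
    refine tsum_congr fun k => ?_
    rcases le_or_gt (2 * (1 / 2) ^ k) y with hl | hl
    · rw [max_eq_left (by linarith)]; simp
    · rw [ek_max k (h X), ek_max k (h X'), heq X X' ((1 / 2) ^ k) (by positivity) (hpow1 k)]
      intro i hi
      exact hag i (hl.trans_le (pow_gap hi))
  let u : ↥(EE S) → ↥(pq '' EE S) := fun q => ⟨pq q, q, q.2, rfl⟩
  let v : ↥(EE S) → ↥D := fun q => ⟨pp q.1.1 (fh (h q.1.1) q.1.2), by
    have hr := fh_range (h0 q.1.1) (h1 q.1.1) ((hdom _ _).1 q.2)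
    exact (hmem _ _ ((h0 _).trans hr.1) hr.2.1).2 hr.1⟩
  have hu : Continuous u := (pq_cont.comp continuous_subtype_val).subtype_mk _
  have hloc : ∀ k : ℕ, Continuous fun q : (ℕ → Bool) × ℝ => ek k (h q.1) := by
    intro k
    rw [continuous_iff_continuousAt]
    intro q
    refine continuousAt_const.congr (f := fun _ => ek k (h q.1)) ?_
    have hop := agree_open q.1 (z := (1 / 2) ^ k) (by positivity)
    filter_upwards [hop.mem_nhds (fun i _ => rfl)] with q' hq'
    rw [ek_max k (h q.1), ek_max k (h q'.1), heq q.1 q'.1 _ (by positivity) (hpow1 k) hq']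
  have hfc : Continuous fun q : ↥(EE S) => fh (h q.1.1) q.1.2 := by
    unfold fh
    refine Continuous.add (by fun_prop) ?_
    have hs : Summable fun k : ℕ => 2 * (1 / 2 : ℝ) ^ k :=
      (summable_geometric_of_lt_one (by norm_num) (by norm_num)).mul_left 2
    refine continuous_tsum (fun k => ?_) hs (fun k q => ?_)
    · exact Continuous.mul (by fun_prop) ((hloc k).comp continuous_subtype_val)
    · have hq0 : 0 ≤ q.1.2 := q.2.1
      have e0 : 0 ≤ ek k (h q.1.1) := le_min zero_le_one (le_max_left _ _)
      have e1 : ek k (h q.1.1) ≤ 1 := min_le_left _ _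
      have e2 : 0 ≤ max 0 (2 * (1 / 2) ^ k - q.1.2) := le_max_left _ _
      have e3 : max 0 (2 * (1 / 2) ^ k - q.1.2) ≤ 2 * (1 / 2) ^ k :=
        max_le (by positivity) (by linarith)
      rw [Real.norm_of_nonneg (mul_nonneg e2 e0)]
      exact (mul_le_of_le_one_right e2 e1).trans e3
  have hv : Continuous v :=
    (pq_cont.comp ((continuous_fst.comp continuous_subtype_val).prodMk hfc)).subtype_mk _
  have hus : Function.Surjective u := by
    rintro ⟨_, q, hq, rfl⟩
    exact ⟨⟨q, hq⟩, rfl⟩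
  have hvs : Function.Surjective v := by
    rintro ⟨d, hd⟩
    obtain ⟨⟨X, w⟩, hw, rfl⟩ := hDB hd
    have hw0 : 0 ≤ w := hw.2.1
    have hw1 : w ≤ 1 := hw.2.2
    obtain ⟨y, hy, hyw⟩ := fh_surj (h0 X) (h1 X) ((hmem X w hw0 hw1).1 hd) hw1
    refine ⟨⟨(X, y), (hdom X y).2 hy⟩, Subtype.ext ?_⟩
    change pp X (fh (h X) y) = pp X w
    rw [hyw]
  have hback : ∀ X X' y y', dom (h X) y → dom (h X') y' → y ≤ y' →
      fh (h X) y = fh (h X') y' → (∀ i, fh (h X) y < (1 / 2) ^ i → X i = X' i) → y = y' := by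
    intro X X' y y' hd hd' hyy hf hag
    have hag2 : ∀ i, y < (1 / 2) ^ i → X i = X' i := fun i hi =>
      hag i ((fh_level (h0 X) (h1 X) hd i).2 hi)
    have hw := hwd X X' y hd.1 hag2
    have hd2 : dom (h X') y := by
      refine ⟨hd.1, hd.2.1, fun n hn => hd'.2.2 n ?_⟩
      rw [← fh_level (h0 X') (h1 X') hd' n, ← hf]
      exact (fh_level (h0 X) (h1 X) hd n).2 hn
    by_contra hne
    have := fh_mono (h0 X') (h1 X') hd2 hd' (lt_of_le_of_ne hyy hne)
    linarith
  obtain ⟨e⟩ := homeo_of_fibers hu hv hus hvs (by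
    rintro ⟨⟨X, y⟩, hq⟩ ⟨⟨X', y'⟩, hq'⟩
    have hd := (hdom _ _).1 hq
    have hd' := (hdom _ _).1 hq'
    have hr := fh_range (h0 X) (h1 X) hd
    rw [Subtype.ext_iff, Subtype.ext_iff]
    change pp X y = pp X' y' ↔ pp X (fh (h X) y) = pp X' (fh (h X') y')
    rw [pp_eq_iff hd.1, pp_eq_iff ((h0 X).trans hr.1)]
    constructor
    · rintro ⟨rfl, hag⟩
      exact ⟨hwd X X' y hd.1 hag, fun i hi => hag i (hr.2.2.trans_lt hi)⟩
    · rintro ⟨hf, hag⟩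
      refine ⟨?_, fun i hi => hag i ((fh_level (h0 X) (h1 X) hd i).2 hi)⟩
      rcases le_total y y' with hl | hl
      · exact hback X X' y y' hd hd' hl hf hag
      · exact (hback X' X y' y hd' hd hl hf.symm
          (fun i hi => (hag i (by rw [hf]; exact hi)).symm)).symm)
  exact ⟨e.symm⟩

end

theorem dendrite_subset_of_psiSet_iff_homeomorphic_subtree
    (T : Set (List Bool)) (hT : IsTreeOfStrings T)
    (D : Set (ℝ × ℝ)) (hroot : psiPt [] ∈ D) (hsub : D ⊆ PsiSet T) :
    IsDendrite D ↔ ∃ S : Set (List Bool), S.Nonempty ∧ IsTreeOfStrings S ∧ S ⊆ T ∧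
      Nonempty (↥D ≃ₜ ↥(PsiSet S)) := by
  have hTne : T.Nonempty := by
    by_contra hcon
    rw [not_nonempty_iff_eq_empty] at hcon
    subst hcon
    have := hsub hroot
    simp [PsiSet] at this
  constructor
  · intro hD
    exact hard_direction hT hTne hsub hroot hD.1.1 hD.1.2.isPreconnected
  · rintro ⟨S, hSne, hS, -, ⟨e⟩⟩
    exact easy_direction hT hTne hsub hSne hS e
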